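/- Let r ≥ 2 and let a_1, …, a_r be integers with a_i ≥ 2 for all i. The characteristic polynomial of the integer adjacency matrix of G(a_1,…,a_r) equals (X − λ) · (X − ε)^{a_1⋯a_{r−1}(a_r−1)} · Π_{i=1}^{r−1} (X + x_r^i)^{a_1⋯a_{i−1}(a_i−1)}, where ε = −1 if r is odd, ε = 0 if r is even, and λ := Σ_{i=1}^{r−1} a_1⋯a_{i−1}(a_i − 1)·x_r^i + (a_1⋯a_{r−1}(a_r − 1) if r is odd, 0 if r is even). In other words, the spectrum of G(a_1,…,a_r) consists of the integers −x_r^i with multiplicity a_1⋯a_{i−1}(a_i−1) for 1 ≤ i ≤ r−1, the integer ε with multiplicity a_1⋯a_{r−1}(a_r−1), and the simple eigenvalue λ. -/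

import Mathlib

/-- The cograph with balanced cotree `T_G(a_1,…,a_{r-1},0|0,…,0,a_r)`:
vertices are tuples `(v_1,…,v_r)` with `v_i ∈ {1,…,a_i}` (here indexed by `Fin r`,
coordinate `i : Fin r` corresponding to paper index `i+1`), two distinct tuples
being adjacent iff the least 1-based index at which they differ is odd
(equivalently, the least 0-based index is even). -/
def balG (r : ℕ) (a : ℕ → ℕ) :
    SimpleGraph ((i : Fin r) → Fin (a ((i : ℕ) + 1))) :=
  SimpleGraph.fromRel (fun u v => ∃ i : Fin r,
    u i ≠ v i ∧ Even (i : ℕ) ∧ ∀ j : Fin r, (j : ℕ) < (i : ℕ) → u j = v j)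

open scoped Classical in
/-- The integer adjacency matrix of `balG r a`. -/
noncomputable def adjMatZ (r : ℕ) (a : ℕ → ℕ) :
    Matrix ((i : Fin r) → Fin (a ((i : ℕ) + 1))) ((i : Fin r) → Fin (a ((i : ℕ) + 1))) ℤ :=
  Matrix.of fun u v => if (balG r a).Adj u v then 1 else 0

/-- `gam a n l` is the product `a n * a (n-1) * ⋯ * a l`, i.e. γ_{n,l}, as an integer. -/
def gam (a : ℕ → ℕ) (n l : ℕ) : ℤ := ∏ k ∈ Finset.Icc l n, (a k : ℤ)

/-- The integer `x_r^i`: it equals `∑_{k=1}^{r-i} γ_{r,i+k} (-1)^k` when `i` is even and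
`∑_{k=1}^{r-i} γ_{r,i+k} (-1)^(k+1)` when `i` is odd, plus `1` exactly when `r` is odd. -/
def xri (a : ℕ → ℕ) (r i : ℕ) : ℤ :=
  (∑ k ∈ Finset.Icc 1 (r - i), gam a r (i + k) * (-1) ^ (if Even i then k else k + 1))
    + (if Odd r then 1 else 0)

/-!
A matrix `M_r` whose entry at two tuples depends only on the first coordinate in which they differ
is, up to scalar matrices, the matrix for the first `r - 1` coordinates with every entry blown up to
a constant `a_r × a_r` block. Blowing up multiplies the nonzero part of the spectrum by `a_r` and
adds zeros, since it turns `B * A` into `A * B`; so `charpoly M_r` is obtained recursively. The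
eigenvalue of the constant functions is then read off from `trace M_r = 0`.
-/

open Finset Matrix Polynomial

section Charpoly

variable {R m : Type*} [CommRing R] [Fintype m] [DecidableEq m]

lemma charpoly_add_scalar (M : Matrix m m R) (c : R) :
    (M + scalar m c).charpoly = M.charpoly.comp (X - C c) := by
  rw [← sub_neg_eq_add, ← map_neg, charpoly_sub_scalar, C_neg, ← sub_eq_add_neg]

lemma charpoly_submatrix_snd {ι : Type*} [Fintype ι] [DecidableEq ι] [Nonempty ι]
    (N : Matrix m m R) :
    (N.submatrix (Prod.snd : ι × m → m) Prod.snd).charpoly =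
      X ^ (Fintype.card m * (Fintype.card ι - 1)) * (Fintype.card ι • N).charpoly := by
  -- `A * B` and `B * A` have the same characteristic polynomial up to a power of `X`.
  let A : Matrix (ι × m) m R := (1 : Matrix m m R).submatrix Prod.snd id
  let B : Matrix m (ι × m) R := N.submatrix id Prod.snd
  have hAB : A * B = N.submatrix Prod.snd Prod.snd := by
    ext x y
    simp [A, B, mul_apply, one_apply]
  have hBA : B * A = Fintype.card ι • N := by
    ext x y
    simp [A, B, mul_apply, one_apply, Fintype.sum_prod_type]
  have hcard : Fintype.card m ≤ Fintype.card (ι × m) := by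
    rw [Fintype.card_prod]
    exact Nat.le_mul_of_pos_left _ Fintype.card_pos
  rw [← hAB, charpoly_mul_comm_of_le A B hcard, hBA, Fintype.card_prod, Nat.mul_sub, mul_one,
    mul_comm (Fintype.card ι)]

lemma trace_eq_of_charpoly_eq_prod {ι : Type*} {M : Matrix m m R} {c : R} {s : Finset ι}
    {μ : ι → R} {n : ι → ℕ}
    (h : M.charpoly = (X - C c) * ∏ i ∈ s, (X - C (μ i)) ^ n i) :
    M.trace = c + ∑ i ∈ s, n i * μ i := by
  have hmonic (i : ι) : ((X - C (μ i)) ^ n i).Monic := (monic_X_sub_C _).pow _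
  rw [trace_eq_neg_charpoly_nextCoeff, h,
    (monic_X_sub_C c).nextCoeff_mul (monic_prod_of_monic _ _ fun i _ => hmonic i),
    Monic.nextCoeff_prod _ _ fun i _ => hmonic i]
  simp [(monic_X_sub_C _).nextCoeff_pow, add_comm]

end Charpoly

section FirstDiff

/-- `i` is the first coordinate in which the tuples `u` and `v` differ. -/
def IsFirstDiff {r : ℕ} {α : Fin r → Type*} (u v : ∀ i, α i) (i : Fin r) : Prop :=
  u i ≠ v i ∧ ∀ j < i, u j = v j

namespace IsFirstDiff

variable {r : ℕ} {α : Fin r → Type*} {u v : ∀ i, α i} {i j : Fin r}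

lemma symm (h : IsFirstDiff u v i) : IsFirstDiff v u i :=
  ⟨h.1.symm, fun j hj => (h.2 j hj).symm⟩

lemma ne (h : IsFirstDiff u v i) : u ≠ v :=
  fun huv => h.1 (congrFun huv i)

lemma unique (hi : IsFirstDiff u v i) (hj : IsFirstDiff u v j) : i = j :=
  le_antisymm (not_lt.1 fun h => hj.1 (hi.2 j h)) (not_lt.1 fun h => hi.1 (hj.2 i h))

end IsFirstDiff

variable {r : ℕ} {α : Fin (r + 1) → Type*} {u v : ∀ i, α i}

lemma isFirstDiff_castSucc {i : Fin r} :
    IsFirstDiff u v i.castSucc ↔ IsFirstDiff (Fin.init u) (Fin.init v) i := by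
  simp [IsFirstDiff, Fin.init, Fin.forall_fin_succ', (Fin.castSucc_lt_last _).not_gt]

lemma isFirstDiff_last :
    IsFirstDiff u v (Fin.last r) ↔
      Fin.init u = Fin.init v ∧ u (Fin.last r) ≠ v (Fin.last r) := by
  simp [IsFirstDiff, Fin.init, Fin.forall_fin_succ', funext_iff, Fin.castSucc_lt_last, and_comm]

end FirstDiff

section FirstDiffMatrix

variable {R : Type*} [CommRing R] (α : ℕ → Type*) (w : ℕ → R) (r : ℕ)

open scoped Classical in
/-- The matrix indexed by tuples whose `(u, v)` entry is `w i` if `i` is the first coordinate in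
which `u` and `v` differ, and `0` if `u = v`. At most one term of the sum is nonzero. -/
noncomputable def firstDiffMatrix : Matrix (∀ i : Fin r, α i) (∀ i : Fin r, α i) R :=
  of fun u v => ∑ i, if IsFirstDiff u v i then w i else 0

lemma smul_firstDiffMatrix {S : Type*} [DistribSMul S R] (c : S) :
    c • firstDiffMatrix α w r = firstDiffMatrix α (c • w) r := by
  ext u v
  simp [firstDiffMatrix, smul_sum, smul_ite]

lemma trace_firstDiffMatrix [∀ i, Fintype (α i)] : (firstDiffMatrix α w r).trace = 0 := by
  simp [trace, firstDiffMatrix, IsFirstDiff]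

lemma firstDiffMatrix_succ [∀ i, Fintype (α i)] [∀ i, DecidableEq (α i)] :
    firstDiffMatrix α w (r + 1) =
      (firstDiffMatrix α w r + scalar _ (w r)).submatrix Fin.init Fin.init - scalar _ (w r) := by
  classical
  ext u v
  have hcastSucc (i : Fin r) : IsFirstDiff u v i.castSucc ↔
      IsFirstDiff (Fin.init u) (Fin.init v) i := isFirstDiff_castSucc
  have huv : u = v ↔ Fin.init u = Fin.init v ∧ u (Fin.last r) = v (Fin.last r) := by
    simp [funext_iff, Fin.forall_fin_succ', Fin.init]
  simp only [firstDiffMatrix, of_apply, Fin.sum_univ_castSucc, hcastSucc, isFirstDiff_last,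
    Fin.val_castSucc, Fin.val_last, Matrix.sub_apply, submatrix_apply, Matrix.add_apply,
    scalar_apply, diagonal_apply, huv]
  by_cases hinit : Fin.init u = Fin.init v <;>
    by_cases hlast : u (Fin.last r) = v (Fin.last r) <;> simp [hinit, hlast]

section Blocks

variable [∀ i, Fintype (α i)]

/-- The sum of a row of `firstDiffMatrix α w r` over the columns that agree with the row index in
the first `i` coordinates. -/
def blockRowSum (i : ℕ) : R :=
  ∑ k ∈ Ico i r, (Fintype.card (α k) - 1) * (∏ j ∈ Ico (k + 1) r, (Fintype.card (α j) : R)) * w k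

/-- The eigenvalue of `firstDiffMatrix α w r` on the functions that depend only on the first `i + 1`
coordinates and sum to zero over the last of these. -/
def blockEigenvalue (i : ℕ) : R :=
  blockRowSum α w r (i + 1) - (∏ j ∈ Ico (i + 1) r, (Fintype.card (α j) : R)) * w i

/-- The rank of the module of functions that depend only on the first `i + 1` coordinates and sum to
zero over the last of these. -/
def blockMultiplicity (i : ℕ) : ℕ :=
  (∏ j ∈ range i, Fintype.card (α j)) * (Fintype.card (α i) - 1)

variable {r} {i : ℕ}

lemma blockRowSum_succ (hi : i ≤ r) :
    blockRowSum α w (r + 1) i =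
      blockRowSum α (Fintype.card (α r) • w) r i + (Fintype.card (α r) - 1) * w r := by
  rw [blockRowSum, sum_Ico_succ_top hi, Ico_self, prod_empty, mul_one, blockRowSum]
  congr 1
  refine sum_congr rfl fun k hk => ?_
  rw [prod_Ico_succ_top (mem_Ico.1 hk).2, Pi.smul_apply, nsmul_eq_mul]
  ring

lemma blockEigenvalue_succ (hi : i < r) :
    blockEigenvalue α w (r + 1) i =
      blockEigenvalue α (Fintype.card (α r) • w) r i + (Fintype.card (α r) - 1) * w r := by
  rw [blockEigenvalue, blockRowSum_succ α w hi, prod_Ico_succ_top hi, blockEigenvalue,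
    Pi.smul_apply, nsmul_eq_mul]
  ring

lemma blockEigenvalue_succ_self : blockEigenvalue α w (r + 1) r = -w r := by
  simp [blockEigenvalue, blockRowSum]

lemma blockEigenvalue_eq_add_succ (hi : i + 1 < r) :
    blockEigenvalue α w r i =
      (∏ j ∈ Ico (i + 1) r, (Fintype.card (α j) : R)) * (w (i + 1) - w i) +
        blockEigenvalue α w r (i + 1) := by
  rw [blockEigenvalue, blockEigenvalue, blockRowSum, sum_eq_sum_Ico_succ_bot hi,
    prod_eq_prod_Ico_succ_bot hi, blockRowSum]
  ring

end Blocks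

section

variable [∀ i, Fintype (α i)] [∀ i, DecidableEq (α i)]

lemma charpoly_submatrix_init [Nonempty (α r)]
    (N : Matrix (∀ i : Fin r, α i) (∀ i : Fin r, α i) R) :
    (N.submatrix Fin.init Fin.init :
        Matrix (∀ i : Fin (r + 1), α i) (∀ i : Fin (r + 1), α i) R).charpoly =
      X ^ blockMultiplicity α r * (Fintype.card (α r) • N).charpoly := by
  let e := Fin.snocEquiv fun i : Fin (r + 1) => α i
  have hreindex : reindex e e (N.submatrix Prod.snd Prod.snd) = N.submatrix Fin.init Fin.init := rfl
  have hcard : Fintype.card (∀ i : Fin r, α i) = ∏ i ∈ range r, Fintype.card (α i) := by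
    rw [Fintype.card_pi, Fin.prod_univ_eq_prod_range fun i => Fintype.card (α i)]
  rw [blockMultiplicity, ← hcard, ← charpoly_submatrix_snd, ← hreindex]
  exact charpoly_reindex e _

lemma charpoly_firstDiffMatrix_succ [Nonempty (α r)] :
    (firstDiffMatrix α w (r + 1)).charpoly =
      (X + C (w r)) ^ blockMultiplicity α r *
        (firstDiffMatrix α (Fintype.card (α r) • w) r).charpoly.comp
          (X - C ((Fintype.card (α r) - 1) * w r)) := by
  have hscalar : Fintype.card (α r) • scalar (∀ i : Fin r, α i) (w r) =
      scalar _ (Fintype.card (α r) * w r) := by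
    rw [← map_nsmul, nsmul_eq_mul]
  rw [firstDiffMatrix_succ, charpoly_sub_scalar, charpoly_submatrix_init, smul_add,
    smul_firstDiffMatrix, hscalar, charpoly_add_scalar, mul_comp, pow_comp, X_comp, comp_assoc]
  congr 2
  simp only [sub_comp, X_comp, C_comp, sub_mul, one_mul, C_sub]
  ring

theorem charpoly_firstDiffMatrix (hα : ∀ i < r, Nonempty (α i)) :
    (firstDiffMatrix α w r).charpoly =
      (X - C (blockRowSum α w r 0)) *
        ∏ i ∈ range r, (X - C (blockEigenvalue α w r i)) ^ blockMultiplicity α i := by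
  induction r generalizing w with
  | zero => simp [firstDiffMatrix, blockRowSum, charpoly, charmatrix, det_unique]
  | succ r ih =>
    have := hα r r.lt_succ_self
    set c : R := (Fintype.card (α r) - 1) * w r
    have hshift (x : R) : (X - C x).comp (X - C c) = X - C (x + c) := by
      simp only [sub_comp, X_comp, C_comp, C_add]
      ring
    rw [charpoly_firstDiffMatrix_succ, ih _ fun i hi => hα i (hi.trans r.lt_succ_self),
      prod_range_succ, blockEigenvalue_succ_self, blockRowSum_succ α w r.zero_le, mul_comp, hshift,
      Polynomial.prod_comp, C_neg, sub_neg_eq_add, mul_comm, mul_assoc]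
    congr 2
    refine prod_congr rfl fun i hi => ?_
    rw [pow_comp, hshift, blockEigenvalue_succ α w (mem_range.1 hi)]

end

lemma blockRowSum_zero [∀ i, Fintype (α i)] (hα : ∀ i < r, Nonempty (α i)) :
    blockRowSum α w r 0 =
      -∑ i ∈ range r, blockMultiplicity α i * blockEigenvalue α w r i := by
  classical
  rw [eq_neg_iff_add_eq_zero, ← trace_eq_of_charpoly_eq_prod (charpoly_firstDiffMatrix α w r hα),
    trace_firstDiffMatrix]

end FirstDiffMatrix

section BalancedCograph

lemma balG_adj_iff {r : ℕ} {a : ℕ → ℕ} {u v : (i : Fin r) → Fin (a (i + 1))} :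
    (balG r a).Adj u v ↔ ∃ i, IsFirstDiff u v i ∧ Even (i : ℕ) := by
  rw [balG, SimpleGraph.fromRel_adj]
  constructor
  · rintro ⟨-, ⟨i, hne, heven, heq⟩ | ⟨i, hne, heven, heq⟩⟩
    · exact ⟨i, ⟨hne, heq⟩, heven⟩
    · exact ⟨i, IsFirstDiff.symm ⟨hne, heq⟩, heven⟩
  · rintro ⟨i, hi, heven⟩
    exact ⟨hi.ne, Or.inl ⟨i, hi.1, heven, hi.2⟩⟩

lemma adjMatZ_eq_firstDiffMatrix (r : ℕ) (a : ℕ → ℕ) :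
    adjMatZ r a =
      firstDiffMatrix (fun i => Fin (a (i + 1))) (fun i => if Even i then 1 else 0) r := by
  classical
  ext u v
  simp only [adjMatZ, firstDiffMatrix, of_apply, balG_adj_iff]
  split_ifs with hadj
  · obtain ⟨i, hi, heven⟩ := hadj
    rw [sum_eq_single i (fun j _ hji => if_neg fun hj => hji (hj.unique hi)) (by simp), if_pos hi,
      if_pos heven]
  · symm
    refine sum_eq_zero fun i _ => ?_
    simp only [ite_eq_right_iff]
    exact fun hi heven => absurd ⟨i, hi, heven⟩ hadj

@[to_additive]
lemma prod_range_succ_eq_prod_Icc {M : Type*} [CommMonoid M] (f : ℕ → M) (n : ℕ) :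
    ∏ i ∈ range n, f (i + 1) = ∏ i ∈ Icc 1 n, f i := by
  rw [range_eq_Ico, prod_Ico_add' f 0 n 1, zero_add, Ico_add_one_right_eq_Icc]

variable (a : ℕ → ℕ) {r i : ℕ}

lemma gam_eq_prod_Ico : gam a r (i + 1) = ∏ j ∈ Ico i r, (a (j + 1) : ℤ) := by
  rw [gam, prod_Ico_add' (fun k => (a k : ℤ)), Ico_add_one_right_eq_Icc]

lemma xri_self : xri a r r = if Odd r then 1 else 0 := by
  simp [xri]

lemma xri_eq_sum_range :
    xri a r i = (∑ k ∈ range (r - i), (-1) ^ (i + k + 1) * gam a r (i + k + 1)) +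
      if Odd r then 1 else 0 := by
  have hsign (k : ℕ) : (-1 : ℤ) ^ (if Even i then k else k + 1) = (-1) ^ (i + k) := by
    rw [pow_add]
    split_ifs with hi
    · rw [hi.neg_one_pow, one_mul]
    · rw [(Nat.not_even_iff_odd.1 hi).neg_one_pow, pow_succ']
  simp only [xri, hsign, ← sum_range_succ_eq_sum_Icc, mul_comm, add_assoc]

lemma xri_eq_add_succ (hi : i < r) :
    xri a r i = (-1) ^ (i + 1) * gam a r (i + 1) + xri a r (i + 1) := by
  obtain ⟨n, rfl⟩ := Nat.exists_eq_add_of_lt hi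
  have hn : i + n + 1 - i = n + 1 := by lia
  have hn' : i + n + 1 - (i + 1) = n := by lia
  rw [xri_eq_sum_range, xri_eq_sum_range, hn, hn', sum_range_succ', add_zero]
  simp only [add_right_comm i 1, add_assoc i]
  ring

lemma blockEigenvalue_eq_neg_xri (hi : i < r) :
    blockEigenvalue (fun j => Fin (a (j + 1))) (fun j => if Even j then 1 else 0) r i =
      -xri a r (i + 1) := by
  obtain ⟨s, rfl⟩ := Nat.exists_eq_add_one_of_ne_zero (Nat.ne_zero_of_lt hi)
  induction Nat.le_of_lt_succ hi using Nat.decreasingInduction with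
  | self =>
    rw [blockEigenvalue_succ_self, xri_self]
    simp only [Nat.odd_add_one, Nat.not_odd_iff_even]
  | of_succ i his ih =>
    have hweight : ((if Even (i + 1) then 1 else 0) - if Even i then 1 else 0 : ℤ) =
        (-1) ^ (i + 1) := by
      rcases i.even_or_odd with h | h
      · simp [h, h.add_one.neg_one_pow, Nat.even_add_one]
      · simp [Nat.not_even_iff_odd.2 h, h.add_one.neg_one_pow, Nat.even_add_one]
    have hi' : i + 1 < s + 1 := Nat.add_lt_add_right his 1
    rw [blockEigenvalue_eq_add_succ _ _ hi', ih hi', xri_eq_add_succ a hi', gam_eq_prod_Ico,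
      hweight]
    simp only [Fintype.card_fin]
    ring

lemma blockMultiplicity_fin :
    blockMultiplicity (fun j => Fin (a (j + 1))) i = (∏ k ∈ Icc 1 i, a k) * (a (i + 1) - 1) := by
  simp only [blockMultiplicity, Fintype.card_fin, prod_range_succ_eq_prod_Icc]

theorem balanced_cograph_charpoly_general (r : ℕ) (a : ℕ → ℕ) (ha : ∀ k ∈ Icc 1 r, a k ≠ 0) :
    (adjMatZ r a).charpoly =
      (X - C (∑ i ∈ Icc 1 r, (((∏ k ∈ Icc 1 (i - 1), a k) * (a i - 1) : ℕ) : ℤ) * xri a r i)) *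
        ∏ i ∈ Icc 1 r, (X + C (xri a r i)) ^ ((∏ k ∈ Icc 1 (i - 1), a k) * (a i - 1)) := by
  have hα (i : ℕ) (hi : i < r) : Nonempty (Fin (a (i + 1))) :=
    Fin.pos_iff_nonempty.1 (Nat.pos_of_ne_zero (ha _ (mem_Icc.2 ⟨i.succ_pos, hi⟩)))
  rw [adjMatZ_eq_firstDiffMatrix, charpoly_firstDiffMatrix _ _ _ hα, blockRowSum_zero _ _ _ hα,
    ← prod_range_succ_eq_prod_Icc (M := ℤ[X]), ← sum_range_succ_eq_sum_Icc, ← sum_neg_distrib]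
  congr 1
  · congr 2
    refine sum_congr rfl fun i hi => ?_
    rw [blockEigenvalue_eq_neg_xri a (mem_range.1 hi), blockMultiplicity_fin, mul_neg, neg_neg,
      add_tsub_cancel_right]
  · refine prod_congr rfl fun i hi => ?_
    rw [blockEigenvalue_eq_neg_xri a (mem_range.1 hi), blockMultiplicity_fin, C_neg, sub_neg_eq_add,
      add_tsub_cancel_right]

end BalancedCograph

open Polynomial in
/-- The full spectrum of the cograph with balanced cotree `T_G(a_1,…,a_{r-1},0|0,…,0,a_r)`:
its characteristic polynomial is
`(X - λ) (X - ε)^{a_1⋯a_{r-1}(a_r-1)} ∏_{i=1}^{r-1} (X + x_r^i)^{a_1⋯a_{i-1}(a_i-1)}`,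
where `ε = -1` if `r` is odd, `ε = 0` if `r` is even, and
`λ = ∑_{i=1}^{r-1} a_1⋯a_{i-1}(a_i-1) x_r^i + (a_1⋯a_{r-1}(a_r-1) if r odd else 0)`. -/
theorem balanced_cograph_charpoly (r : ℕ) (hr : 2 ≤ r) (a : ℕ → ℕ) (ha : ∀ k, 2 ≤ a k) :
    (adjMatZ r a).charpoly =
      (X - C ((∑ i ∈ Finset.Icc 1 (r - 1),
            (((∏ k ∈ Finset.Icc 1 (i - 1), a k) * (a i - 1) : ℕ) : ℤ) * xri a r i) +
          (if Odd r then (((∏ k ∈ Finset.Icc 1 (r - 1), a k) * (a r - 1) : ℕ) : ℤ) else 0))) *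
        (X - C (if Odd r then (-1 : ℤ) else 0)) ^
          ((∏ k ∈ Finset.Icc 1 (r - 1), a k) * (a r - 1)) *
        ∏ i ∈ Finset.Icc 1 (r - 1),
          (X + C (xri a r i)) ^ ((∏ k ∈ Finset.Icc 1 (i - 1), a k) * (a i - 1)) := by
  obtain ⟨s, rfl⟩ : ∃ s, r = s + 1 := ⟨r - 1, by lia⟩
  have hlast : (X - C (if Odd (s + 1) then (-1 : ℤ) else 0)) = X + C (xri a (s + 1) (s + 1)) := by
    rw [xri_self]
    split_ifs <;> simp
  rw [balanced_cograph_charpoly_general _ _ fun k _ => Nat.ne_of_gt (by linarith [ha k]),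
    sum_Icc_succ_top s.succ_pos, prod_Icc_succ_top s.succ_pos, hlast, xri_self, mul_ite, mul_one,
    mul_zero, add_tsub_cancel_right]
  ring
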